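/- Let G be a simple graph on n vertices and let α be a natural number such that every nonempty induced subgraph of G contains a vertex whose degree within that induced subgraph is at most α. Then for every integer k ≥ 1, the number of k-cliques of G is at most n · C(α, k−1), where C(α, k−1) is the binomial coefficient. -/

import Mathlib

theorem clique_count_aux {V : Type*} [Fintype V] [DecidableEq V]
    (G : SimpleGraph V) [DecidableRel G.Adj] (α : ℕ)
    (hdeg : ∀ S : Set V, S.Nonempty → ∃ v ∈ S, {u ∈ S | G.Adj v u}.ncard ≤ α)
    (k : ℕ) (hk : 1 ≤ k) (n : ℕ) : ∀ S : Finset V, S.card = n →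
    ((G.cliqueFinset k).filter (fun s => s ⊆ S)).card ≤ n * α.choose (k - 1) := by
  induction n with
  | zero =>
    intro S hS
    rw [Finset.card_eq_zero] at hS
    subst hS
    rw [zero_mul, Nat.le_zero, Finset.card_eq_zero, Finset.filter_eq_empty_iff]
    intro s hs h
    rw [SimpleGraph.mem_cliqueFinset_iff] at hs
    have h1 := hs.card_eq
    rw [Finset.subset_empty.mp h, Finset.card_empty] at h1
    omega
  | succ n ih =>
    intro S hS
    have hne : S.Nonempty := Finset.card_pos.mp (by omega)
    obtain ⟨v, hv, hd⟩ := hdeg (S : Set V) (by simpa using hne)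
    have hv' : v ∈ S := by simpa using hv
    have hN : (S.filter (fun u => G.Adj v u)).card ≤ α := by
      rw [← Set.ncard_coe_finset]
      simpa using hd
    have hsub : (G.cliqueFinset k).filter (fun s => s ⊆ S) ⊆
        (G.cliqueFinset k).filter (fun s => s ⊆ S.erase v) ∪
        ((S.filter (fun u => G.Adj v u)).powersetCard (k - 1)).image (insert v) := by
      intro s hs
      rw [Finset.mem_filter] at hs
      obtain ⟨hc, hsS⟩ := hs
      rw [Finset.mem_union]
      by_cases hvs : v ∈ s
      · right
        rw [SimpleGraph.mem_cliqueFinset_iff] at hc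
        rw [Finset.mem_image]
        refine ⟨s.erase v, ?_, Finset.insert_erase hvs⟩
        rw [Finset.mem_powersetCard]
        refine ⟨?_, by rw [Finset.card_erase_of_mem hvs, hc.card_eq]⟩
        intro u hu
        rw [Finset.mem_erase] at hu
        rw [Finset.mem_filter]
        exact ⟨hsS hu.2, hc.isClique (by simpa using hvs) (by simpa using hu.2) hu.1.symm⟩
      · left
        rw [Finset.mem_filter]
        exact ⟨hc, Finset.subset_erase.mpr ⟨hsS, hvs⟩⟩
    have h1 := ih (S.erase v) (by rw [Finset.card_erase_of_mem hv', hS]; rfl)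
    have h2 : (((S.filter (fun u => G.Adj v u)).powersetCard (k - 1)).image (insert v)).card
        ≤ α.choose (k - 1) := by
      refine Finset.card_image_le.trans ?_
      rw [Finset.card_powersetCard]
      exact Nat.choose_le_choose _ hN
    have h3 := (Finset.card_le_card hsub).trans (Finset.card_union_le _ _)
    rw [add_mul, one_mul]
    omega

/-- Claim 5.2 of the paper: an `α`-degenerate graph on `n` vertices has at most
`n · C(α, k-1)` many `k`-cliques, for every `k ≥ 1`. -/
theorem clique_count_le_of_degenerate {V : Type*} [Fintype V] [DecidableEq V]
    (G : SimpleGraph V) [DecidableRel G.Adj] (α : ℕ)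
    (hdeg : ∀ S : Set V, S.Nonempty → ∃ v ∈ S, {u ∈ S | G.Adj v u}.ncard ≤ α)
    (k : ℕ) (hk : 1 ≤ k) :
    (G.cliqueFinset k).card ≤ Fintype.card V * α.choose (k - 1) := by
  have h := clique_count_aux G α hdeg k hk _ Finset.univ rfl
  simpa using h
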